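/- The normalized Bessel function satisfies the product formula for the generalized translation: for ν > 0 and all λ, μ ≥ 0, (Γ((ν+1)/2)/(√π Γ(ν/2))) ∫_0^π j_{(ν−1)/2}(√(λ² + μ² − 2λμ cos φ)) sin^{ν−1}φ dφ = j_{(ν−1)/2}(λ) · j_{(ν−1)/2}(μ). -/

import Mathlib

open MeasureTheory Real Set Metric

noncomputable section

/-- The one-dimensional generalized translation
`ᵛ𝒯_s^t g(s) = (Γ((ν+1)/2)/(√π Γ(ν/2))) ∫_0^π g(√(s²+t²−2st cos φ)) sin^{ν−1} φ dφ`. -/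
def genT (ν : ℝ) (g : ℝ → ℝ) (s t : ℝ) : ℝ :=
  (Real.Gamma ((ν + 1) / 2) / (Real.sqrt π * Real.Gamma (ν / 2))) *
    ∫ φ in (0:ℝ)..π,
      g (Real.sqrt (s ^ 2 + t ^ 2 - 2 * s * t * Real.cos φ)) * Real.sin φ ^ (ν - 1)

/-- The normalized Bessel function `j_ω`, via the Poisson integral representation
`j_ω(t) = (Γ(ω+1)/(√π Γ(ω+1/2))) ∫_0^π cos(t cos θ) sin^{2ω} θ dθ`,
which for `ω > -1/2` agrees with `Γ(ω+1)(2/t)^ω J_ω(t)`. -/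
def normBessel (ω t : ℝ) : ℝ :=
  (Real.Gamma (ω + 1) / (Real.sqrt π * Real.Gamma (ω + 1 / 2))) *
    ∫ θ in (0:ℝ)..π, Real.cos (t * Real.cos θ) * Real.sin θ ^ (2 * ω)

/-!
The Bessel operator `d²/dx² + (ν / x) d/dx` is the radial Laplacian in dimension `ν + 1`, and
`j = j_{(ν - 1) / 2}` is its eigenfunction for the eigenvalue `-1`. For integral `ν`, generalized
translation averages a radial function over a sphere of radius `s`, so it commutes with the
Laplacian; for real `ν` this follows from an integration by parts in `φ`. Hence
`t ↦ ᵛ𝒯_s^t j(s)` and `t ↦ j(s) j(t)` are eigenfunctions for the eigenvalue `-1` which agree at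
`t = 0`, and an energy estimate shows that such an eigenfunction is determined by its value there.
-/

section WeightedIntegrals

theorem hasDerivAt_integral_mul_of_continuous {a b : ℝ} {w : ℝ → ℝ}
    (hw : IntervalIntegrable w volume a b) {f f' : ℝ → ℝ → ℝ} (hf : ∀ x, Continuous (f x))
    (hf' : Continuous (Function.uncurry f'))
    (hderiv : ∀ φ ∈ uIoo a b, ∀ x, HasDerivAt (fun x ↦ f x φ) (f' x φ) x) (x₀ : ℝ) :
    HasDerivAt (fun x ↦ ∫ φ in a..b, f x φ * w φ) (∫ φ in a..b, f' x₀ φ * w φ) x₀ := by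
  have hint : ∀ {h : ℝ → ℝ}, Continuous h →
      IntervalIntegrable (fun φ ↦ h φ * w φ) volume a b :=
    fun hh ↦ hw.continuousOn_mul hh.continuousOn
  have hmeas : ∀ {h : ℝ → ℝ}, Continuous h →
      AEStronglyMeasurable (fun φ ↦ h φ * w φ) (volume.restrict (uIoc a b)) :=
    fun hh ↦ (hint hh).def'.aestronglyMeasurable
  obtain ⟨C, hC⟩ := ((isCompact_closedBall x₀ 1).prod isCompact_uIcc).exists_bound_of_continuousOn
    (hf'.continuousOn (s := closedBall x₀ 1 ×ˢ uIcc a b))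
  have hne : ∀ᵐ φ : ℝ, φ ≠ max a b := Measure.ae_ne volume _
  refine (intervalIntegral.hasDerivAt_integral_of_dominated_loc_of_deriv_le
    (F' := fun x φ ↦ f' x φ * w φ) (bound := fun φ ↦ C * ‖w φ‖)
    (closedBall_mem_nhds x₀ one_pos) (.of_forall fun x ↦ hmeas (hf x)) (hint (hf x₀))
    (hmeas (hf'.uncurry_left x₀)) (.of_forall fun φ hφ x hx ↦ ?_) (hw.norm.const_mul C) ?_).2
  · rw [norm_mul]
    gcongr
    exact hC (x, φ) ⟨hx, uIoc_subset_uIcc hφ⟩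
  · filter_upwards [hne] with φ hφ hmem x _
    exact (hderiv φ ⟨hmem.1, hmem.2.lt_of_ne hφ⟩ x).mul_const (w φ)

theorem intervalIntegrable_sin_rpow {r : ℝ} (hr : -1 < r) :
    IntervalIntegrable (fun φ ↦ sin φ ^ r) volume 0 π := by
  have hleft : IntervalIntegrable (fun φ ↦ sin φ ^ r) volume 0 (π / 2) := by
    have hsinc : ∀ φ ∈ uIcc 0 (π / 2), 0 < sinc φ := fun φ hφ ↦ by
      rw [uIcc_of_le pi_div_two_pos.le] at hφ
      rcases hφ.1.eq_or_lt with rfl | h0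
      · simp
      · rw [sinc_of_ne_zero h0.ne']
        exact div_pos (sin_pos_of_pos_of_lt_pi h0 (by linarith [hφ.2, pi_pos])) h0
    have hsinc_rpow : ContinuousOn (fun φ ↦ sinc φ ^ r) (uIcc 0 (π / 2)) :=
      continuous_sinc.continuousOn.rpow_const fun φ hφ ↦ .inl (hsinc φ hφ).ne'
    refine ((intervalIntegral.intervalIntegrable_rpow' hr).mul_continuousOn
      hsinc_rpow).congr_uIoo fun φ hφ ↦ ?_
    have hsincφ := hsinc φ (uIoo_subset_uIcc_self hφ)
    rw [uIoo_of_le pi_div_two_pos.le] at hφ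
    change φ ^ r * sinc φ ^ r = sin φ ^ r
    rw [← mul_rpow hφ.1.le hsincφ.le, sinc_of_ne_zero hφ.1.ne', mul_div_cancel₀ _ hφ.1.ne']
  have hright : IntervalIntegrable (fun φ ↦ sin φ ^ r) volume (π / 2) π := by
    simpa [sin_pi_sub, sub_half] using (hleft.comp_sub_left π).symm
  exact hleft.trans hright

variable {ν : ℝ}

theorem intervalIntegrable_mul_sin_rpow (hν : 0 < ν) {f : ℝ → ℝ} (hf : Continuous f) :
    IntervalIntegrable (fun φ ↦ f φ * sin φ ^ (ν - 1)) volume 0 π :=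
  (intervalIntegrable_sin_rpow (by linarith)).continuousOn_mul hf.continuousOn

theorem integral_mul_sin_sq_mul_sin_rpow (ν : ℝ) (f : ℝ → ℝ) :
    ∫ φ in (0 : ℝ)..π, f φ * sin φ ^ 2 * sin φ ^ (ν - 1) =
      ∫ φ in (0 : ℝ)..π, f φ * sin φ ^ (ν + 2 - 1) := by
  refine intervalIntegral.integral_congr_Ioo_of_le pi_pos.le fun φ hφ ↦ ?_
  simp only [mul_assoc, ← rpow_natCast, ← rpow_add (sin_pos_of_mem_Ioo hφ)]
  congr 2
  push_cast
  ring

theorem integral_linear_combination_mul_sin_rpow (hν : 0 < ν) {f g : ℝ → ℝ} (hf : Continuous f)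
    (hg : Continuous g) (a b : ℝ) :
    ∫ φ in (0 : ℝ)..π, (a * f φ + b * g φ) * sin φ ^ (ν - 1) =
      a * (∫ φ in (0 : ℝ)..π, f φ * sin φ ^ (ν - 1)) +
        b * ∫ φ in (0 : ℝ)..π, g φ * sin φ ^ (ν - 1) := by
  simp only [add_mul, mul_assoc]
  rw [intervalIntegral.integral_add ((intervalIntegrable_mul_sin_rpow hν hf).const_mul a)
    ((intervalIntegrable_mul_sin_rpow hν hg).const_mul b),
    intervalIntegral.integral_const_mul, intervalIntegral.integral_const_mul]

/-- Integration by parts against `(sin φ ^ ν)' = ν cos φ sin φ ^ (ν - 1)`. -/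
theorem integral_add_mul_sin_rpow_eq_zero (hν : 0 < ν) {h k : ℝ → ℝ} (hh : Continuous h)
    (hk : Continuous k) (hderiv : ∀ φ ∈ Ioo 0 π, HasDerivAt h (k φ * sin φ) φ) :
    ∫ φ in (0 : ℝ)..π, (ν * (h φ * cos φ) + k φ * sin φ ^ 2) * sin φ ^ (ν - 1) = 0 := by
  have hint := intervalIntegrable_mul_sin_rpow hν
    (f := fun φ ↦ ν * (h φ * cos φ) + k φ * sin φ ^ 2) (by fun_prop)
  have hcont : Continuous fun φ ↦ h φ * sin φ ^ ν :=
    hh.mul (continuous_sin.rpow_const fun _ ↦ .inr hν.le)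
  rw [intervalIntegral.integral_eq_sub_of_hasDerivAt_of_le pi_pos.le hcont.continuousOn
    (fun φ hφ ↦ ?_) hint]
  · simp [zero_rpow hν.ne']
  · have hsin := (sin_pos_of_mem_Ioo hφ).ne'
    refine ((hderiv φ hφ).mul ((hasDerivAt_sin φ).rpow_const (.inl hsin))).congr_deriv ?_
    rw [rpow_sub_one hsin]
    field_simp
    ring

end WeightedIntegrals

section BesselOperator

/-- `f` is twice differentiable on `ℝ` and is mapped to `F` by the Bessel operator
`d²/dx² + (ν / x) d/dx`, the radial Laplacian in dimension `ν + 1`. The equation is multiplied by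
`x`, so that at `x = 0` it says that `f` has a critical point (for `ν ≠ 0`). -/
def HasBesselLaplacian (ν : ℝ) (f F : ℝ → ℝ) : Prop :=
  ∃ f' f'' : ℝ → ℝ, (∀ x, HasDerivAt f (f' x) x) ∧ (∀ x, HasDerivAt f' (f'' x) x) ∧
    ∀ x, x * f'' x + ν * f' x = x * F x

namespace HasBesselLaplacian

variable {ν : ℝ} {f g F G : ℝ → ℝ}

theorem const_mul (c : ℝ) (hf : HasBesselLaplacian ν f F) :
    HasBesselLaplacian ν (fun x ↦ c * f x) (fun x ↦ c * F x) := by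
  obtain ⟨f', f'', hf', hf'', heq⟩ := hf
  exact ⟨_, _, fun x ↦ (hf' x).const_mul c, fun x ↦ (hf'' x).const_mul c,
    fun x ↦ by linear_combination c * heq x⟩

theorem sub (hf : HasBesselLaplacian ν f F) (hg : HasBesselLaplacian ν g G) :
    HasBesselLaplacian ν (f - g) (F - G) := by
  obtain ⟨f', f'', hf', hf'', hfeq⟩ := hf
  obtain ⟨g', g'', hg', hg'', hgeq⟩ := hg
  refine ⟨f' - g', f'' - g'', fun x ↦ (hf' x).sub (hg' x), fun x ↦ (hf'' x).sub (hg'' x),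
    fun x ↦ ?_⟩
  simp only [Pi.sub_apply]
  linear_combination hfeq x - hgeq x

/-- The energy `f ^ 2 + f' ^ 2` satisfies `x (f ^ 2 + f' ^ 2)' = -2 ν f' ^ 2`, so it is maximal
at `0`, where it vanishes. -/
theorem eq_zero_of_neg_self (hν : 0 < ν) (hf : HasBesselLaplacian ν f (-f)) (h0 : f 0 = 0) :
    f = 0 := by
  obtain ⟨f', f'', hf', hf'', heq⟩ := hf
  let E : ℝ → ℝ := fun x ↦ f x ^ 2 + f' x ^ 2
  have hE : ∀ x, HasDerivAt E (2 * f' x * (f x + f'' x)) x := fun x ↦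
    (((hf' x).fun_pow 2).add ((hf'' x).fun_pow 2)).congr_deriv (by ring)
  have hE' : ∀ x, x * deriv E x ≤ 0 := fun x ↦ by
    have : x * deriv E x = -(2 * ν * f' x ^ 2) := by
      have := heq x
      rw [Pi.neg_apply] at this
      rw [(hE x).deriv]
      linear_combination 2 * f' x * this
    rw [this, neg_nonpos]
    positivity
  have hE0 : E 0 = 0 := by
    have : f' 0 = 0 := by simpa [hν.ne'] using heq 0
    simp [E, h0, this]
  have hdiff : Differentiable ℝ E := fun x ↦ (hE x).differentiableAt
  have hle : ∀ x, E x ≤ E 0 := fun x ↦ by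
    rcases le_total 0 x with hx | hx
    · refine antitoneOn_of_deriv_nonpos (convex_Ici 0) hdiff.continuous.continuousOn
        hdiff.differentiableOn (fun y hy ↦ ?_) self_mem_Ici hx hx
      exact nonpos_of_mul_nonpos_right (hE' y) (by simpa using hy)
    · refine monotoneOn_of_deriv_nonneg (convex_Iic 0) hdiff.continuous.continuousOn
        hdiff.differentiableOn (fun y hy ↦ ?_) hx self_mem_Iic hx
      exact nonneg_of_mul_nonpos_right (hE' y) (by simpa using hy)
  funext x
  have : f x ^ 2 ≤ 0 := by linarith [hle x, sq_nonneg (f' x)]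
  exact pow_eq_zero_iff two_ne_zero |>.1 (this.antisymm (sq_nonneg _))

theorem eq_of_neg_self (hν : 0 < ν) (hf : HasBesselLaplacian ν f (-f))
    (hg : HasBesselLaplacian ν g (-g)) (h0 : f 0 = g 0) : f = g := by
  have hsub : HasBesselLaplacian ν (f - g) (-(f - g)) := by
    simpa only [neg_sub_neg, neg_sub] using hf.sub hg
  exact sub_eq_zero.1 (hsub.eq_zero_of_neg_self hν (sub_eq_zero.2 h0))

end HasBesselLaplacian

/-- `g'` is the radial derivative `r⁻¹ dg/dr` of the profile `g`, that is, the derivative of `g`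
with respect to `r ^ 2 / 2`. -/
def HasRadialDeriv (g g' : ℝ → ℝ) : Prop :=
  ∀ r, HasDerivAt g (r * g' r) r

namespace HasRadialDeriv

variable {g g₁ g₂ : ℝ → ℝ}

theorem continuous (hg : HasRadialDeriv g g₁) : Continuous g :=
  continuous_iff_continuousAt.2 fun r ↦ (hg r).continuousAt

theorem const_mul (c : ℝ) (hg : HasRadialDeriv g g₁) :
    HasRadialDeriv (fun r ↦ c * g r) (fun r ↦ c * g₁ r) := fun r ↦
  ((hg r).const_mul c).congr_deriv (by ring)

theorem comp_sqrt (hg : HasRadialDeriv g g₁) {q : ℝ → ℝ} {q' x : ℝ} (hq : HasDerivAt q q' x)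
    (hpos : 0 < q x) : HasDerivAt (fun x ↦ g √(q x)) (g₁ √(q x) * (q' / 2)) x := by
  have := sqrt_pos.2 hpos
  refine ((hg √(q x)).comp x (hq.sqrt hpos.ne')).congr_deriv ?_
  field_simp

theorem hasBesselLaplacian (hg : HasRadialDeriv g g₁) (hg₁ : HasRadialDeriv g₁ g₂) (ν : ℝ) :
    HasBesselLaplacian ν g (fun r ↦ r ^ 2 * g₂ r + (ν + 1) * g₁ r) :=
  ⟨_, _, hg, fun r ↦ (hasDerivAt_id' r).mul (hg₁ r), fun r ↦ by ring⟩

end HasRadialDeriv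

end BesselOperator

section PoissonIntegral

/-- The Poisson integral of the normalized Bessel function `j_{(ν - 1) / 2}`, without its
Gamma factor. -/
def poissonIntegral (ν t : ℝ) : ℝ :=
  ∫ θ in (0 : ℝ)..π, cos (t * cos θ) * sin θ ^ (ν - 1)

theorem normBessel_eq_mul_poissonIntegral (ν t : ℝ) :
    normBessel ((ν - 1) / 2) t =
      Gamma ((ν + 1) / 2) / (√π * Gamma (ν / 2)) * poissonIntegral ν t := by
  rw [normBessel, poissonIntegral, mul_div_cancel₀ _ two_ne_zero]
  ring_nf

theorem normBessel_abs (ω t : ℝ) : normBessel ω |t| = normBessel ω t := by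
  rcases abs_choice t with h | h <;> simp [normBessel, h]

variable {ν : ℝ} (hν : 0 < ν)
include hν

theorem integral_sin_mul_cos_mul_sin_rpow (t : ℝ) :
    ∫ θ in (0 : ℝ)..π, sin (t * cos θ) * cos θ * sin θ ^ (ν - 1) =
      t / ν * poissonIntegral (ν + 2) t := by
  have hparts := integral_add_mul_sin_rpow_eq_zero hν (h := fun θ ↦ sin (t * cos θ))
    (k := fun θ ↦ -t * cos (t * cos θ)) (by fun_prop) (by fun_prop)
    fun θ _ ↦ (((hasDerivAt_cos θ).const_mul t).sin).congr_deriv (by ring)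
  simp only [mul_assoc (-t)] at hparts
  rw [integral_linear_combination_mul_sin_rpow hν (by fun_prop) (by fun_prop),
    integral_mul_sin_sq_mul_sin_rpow] at hparts
  rw [poissonIntegral, div_mul_eq_mul_div, eq_div_iff hν.ne']
  linear_combination hparts

theorem hasRadialDeriv_poissonIntegral :
    HasRadialDeriv (poissonIntegral ν) (fun t ↦ -ν⁻¹ * poissonIntegral (ν + 2) t) := by
  intro t
  have hderiv := hasDerivAt_integral_mul_of_continuous
    (intervalIntegrable_sin_rpow (r := ν - 1) (by linarith))
    (f := fun t θ ↦ cos (t * cos θ)) (f' := fun t θ ↦ -(sin (t * cos θ) * cos θ))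
    (fun t ↦ by fun_prop) (by fun_prop)
    (fun θ _ t ↦ (((hasDerivAt_id' t).mul_const (cos θ)).cos).congr_deriv (by ring)) t
  refine hderiv.congr_deriv ?_
  simp only [neg_mul, intervalIntegral.integral_neg, integral_sin_mul_cos_mul_sin_rpow hν]
  ring

theorem poissonIntegral_recurrence (t : ℝ) :
    ν * poissonIntegral ν t - (ν + 1) * poissonIntegral (ν + 2) t +
      t ^ 2 / (ν + 2) * poissonIntegral (ν + 2 + 2) t = 0 := by
  have hparts := integral_add_mul_sin_rpow_eq_zero hν (h := fun θ ↦ cos (t * cos θ) * cos θ)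
    (k := fun θ ↦ t * (sin (t * cos θ) * cos θ) - cos (t * cos θ)) (by fun_prop) (by fun_prop)
    fun θ _ ↦ ((((hasDerivAt_cos θ).const_mul t).cos).mul (hasDerivAt_cos θ)).congr_deriv (by ring)
  have hexpand : ∀ θ : ℝ, ν * (cos (t * cos θ) * cos θ * cos θ) +
      (t * (sin (t * cos θ) * cos θ) - cos (t * cos θ)) * sin θ ^ 2 =
      ν * cos (t * cos θ) + 1 * (-(ν + 1) * (cos (t * cos θ) * sin θ ^ 2) +
        t * (sin (t * cos θ) * cos θ * sin θ ^ 2)) := fun θ ↦ by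
    linear_combination ν * cos (t * cos θ) * cos_sq_add_sin_sq θ
  simp only [hexpand] at hparts
  rw [integral_linear_combination_mul_sin_rpow hν (by fun_prop) (by fun_prop),
    integral_linear_combination_mul_sin_rpow hν (by fun_prop) (by fun_prop),
    integral_mul_sin_sq_mul_sin_rpow, integral_mul_sin_sq_mul_sin_rpow,
    integral_sin_mul_cos_mul_sin_rpow (by positivity)] at hparts
  simp only [poissonIntegral] at hparts ⊢
  linear_combination hparts

theorem exists_hasRadialDeriv_normBessel :
    ∃ g₁ g₂ : ℝ → ℝ, HasRadialDeriv (normBessel ((ν - 1) / 2)) g₁ ∧ HasRadialDeriv g₁ g₂ ∧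
      Continuous g₂ ∧ ∀ r, r ^ 2 * g₂ r + (ν + 1) * g₁ r = -normBessel ((ν - 1) / 2) r := by
  have h₀ := hasRadialDeriv_poissonIntegral hν
  have h₁ := hasRadialDeriv_poissonIntegral (ν := ν + 2) (by positivity)
  have h₂ := hasRadialDeriv_poissonIntegral (ν := ν + 2 + 2) (by positivity)
  have hC := funext (normBessel_eq_mul_poissonIntegral ν)
  refine ⟨_, _, hC ▸ h₀.const_mul _, (h₁.const_mul _).const_mul _,
    ((h₂.const_mul _).const_mul _ |>.const_mul _).continuous, fun r ↦ ?_⟩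
  have hrec := poissonIntegral_recurrence hν r
  rw [normBessel_eq_mul_poissonIntegral]
  field_simp at hrec ⊢
  linear_combination hrec

end PoissonIntegral

section GeneralizedTranslation

/-- The third side of a triangle with sides `s` and `t` enclosing the angle `φ`. -/
def thirdSide (s t φ : ℝ) : ℝ :=
  √(s ^ 2 + t ^ 2 - 2 * s * t * cos φ)

@[fun_prop]
theorem continuous_thirdSide (s : ℝ) : Continuous fun p : ℝ × ℝ ↦ thirdSide s p.1 p.2 := by
  unfold thirdSide
  fun_prop

theorem thirdSide_eq_sqrt_sq_add_sq (s t φ : ℝ) :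
    thirdSide s t φ = √((t - s * cos φ) ^ 2 + (s * sin φ) ^ 2) := by
  rw [thirdSide]
  congr 1
  linear_combination -s ^ 2 * sin_sq_add_cos_sq φ

theorem thirdSide_sq (s t φ : ℝ) :
    thirdSide s t φ ^ 2 = (t - s * cos φ) ^ 2 + (s * sin φ) ^ 2 := by
  rw [thirdSide_eq_sqrt_sq_add_sq, sq_sqrt (by positivity)]

theorem thirdSide_pos {s : ℝ} (hs : s ≠ 0) (t : ℝ) {φ : ℝ} (hφ : φ ∈ Ioo 0 π) :
    0 < thirdSide s t φ := by
  have := sin_pos_of_mem_Ioo hφ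
  rw [thirdSide_eq_sqrt_sq_add_sq]
  positivity

theorem genT_comm (ν : ℝ) (g : ℝ → ℝ) (s t : ℝ) : genT ν g s t = genT ν g t s := by
  simp only [genT, add_comm (s ^ 2), mul_right_comm 2 s t]

theorem genT_neg (ν : ℝ) (g : ℝ → ℝ) (s : ℝ) : genT ν (fun r ↦ -g r) s = -genT ν g s := by
  funext t
  simp [genT]

theorem genT_zero_right (ν : ℝ) (g : ℝ → ℝ) (s : ℝ) :
    genT ν g s 0 = g |s| * normBessel ((ν - 1) / 2) 0 := by
  simp only [normBessel_eq_mul_poissonIntegral, genT, poissonIntegral, mul_zero, zero_mul, cos_zero,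
    one_mul, ne_eq, OfNat.ofNat_ne_zero, not_false_eq_true, zero_pow, add_zero, sub_zero,
    sqrt_sq_eq_abs, intervalIntegral.integral_const_mul]
  ring

variable {ν s : ℝ} {g g₁ g₂ : ℝ → ℝ}

namespace HasRadialDeriv

theorem comp_thirdSide_right (hg : HasRadialDeriv g g₁) (hs : s ≠ 0) {φ : ℝ}
    (hφ : φ ∈ Ioo 0 π) (t : ℝ) :
    HasDerivAt (fun t ↦ g (thirdSide s t φ)) (g₁ (thirdSide s t φ) * (t - s * cos φ)) t := by
  have hq : HasDerivAt (fun t ↦ s ^ 2 + t ^ 2 - 2 * s * t * cos φ) (2 * (t - s * cos φ)) t :=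
    (((hasDerivAt_pow 2 t).const_add (s ^ 2)).sub
      (((hasDerivAt_id' t).const_mul (2 * s)).mul_const (cos φ))).congr_deriv (by push_cast; ring)
  have hpos := sqrt_pos.1 (thirdSide_pos hs t hφ)
  exact (hg.comp_sqrt hq hpos).congr_deriv (by rw [thirdSide]; ring)

theorem comp_thirdSide_angle (hg : HasRadialDeriv g g₁) (hs : s ≠ 0) (t : ℝ) {φ : ℝ}
    (hφ : φ ∈ Ioo 0 π) :
    HasDerivAt (fun φ ↦ g (thirdSide s t φ)) (g₁ (thirdSide s t φ) * (s * t) * sin φ) φ := by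
  have hq : HasDerivAt (fun φ ↦ s ^ 2 + t ^ 2 - 2 * s * t * cos φ) (2 * (s * t * sin φ)) φ :=
    (((hasDerivAt_cos φ).const_mul (2 * s * t)).const_sub (s ^ 2 + t ^ 2)).congr_deriv (by ring)
  have hpos := sqrt_pos.1 (thirdSide_pos hs t hφ)
  exact (hg.comp_sqrt hq hpos).congr_deriv (by rw [thirdSide]; ring)

theorem hasDerivAt_integral_comp_thirdSide (hg : HasRadialDeriv g g₁) (hg₁ : Continuous g₁)
    (hν : 0 < ν) (hs : s ≠ 0) (t : ℝ) :
    HasDerivAt (fun t ↦ ∫ φ in (0 : ℝ)..π, g (thirdSide s t φ) * sin φ ^ (ν - 1))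
      (∫ φ in (0 : ℝ)..π, g₁ (thirdSide s t φ) * (t - s * cos φ) * sin φ ^ (ν - 1)) t := by
  have hcont := hg.continuous
  refine hasDerivAt_integral_mul_of_continuous
    (intervalIntegrable_sin_rpow (r := ν - 1) (by linarith))
    (f' := fun t φ ↦ g₁ (thirdSide s t φ) * (t - s * cos φ))
    (fun t ↦ by fun_prop) (by fun_prop) (fun φ hφ ↦ ?_) t
  rw [uIoo_of_le pi_pos.le] at hφ
  exact hg.comp_thirdSide_right hs hφ

theorem hasDerivAt_integral_comp_thirdSide_mul (hg : HasRadialDeriv g g₁) (hg₁ : Continuous g₁)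
    (hν : 0 < ν) (hs : s ≠ 0) (t : ℝ) :
    HasDerivAt
      (fun t ↦ ∫ φ in (0 : ℝ)..π, g (thirdSide s t φ) * (t - s * cos φ) * sin φ ^ (ν - 1))
      (∫ φ in (0 : ℝ)..π, (g₁ (thirdSide s t φ) * (t - s * cos φ) ^ 2 + g (thirdSide s t φ)) *
        sin φ ^ (ν - 1)) t := by
  have hcont := hg.continuous
  refine hasDerivAt_integral_mul_of_continuous
    (intervalIntegrable_sin_rpow (r := ν - 1) (by linarith))
    (f' := fun t φ ↦ g₁ (thirdSide s t φ) * (t - s * cos φ) ^ 2 + g (thirdSide s t φ))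
    (fun t ↦ by fun_prop) (by fun_prop) (fun φ hφ t ↦ ?_) t
  rw [uIoo_of_le pi_pos.le] at hφ
  exact ((hg.comp_thirdSide_right hs hφ t).mul
    ((hasDerivAt_id' t).sub_const (s * cos φ))).congr_deriv (by ring)

theorem hasBesselLaplacian_genT (hg : HasRadialDeriv g g₁) (hg₁ : HasRadialDeriv g₁ g₂)
    (hg₂ : Continuous g₂) (hν : 0 < ν) (hs : s ≠ 0) :
    HasBesselLaplacian ν (genT ν g s)
      (genT ν (fun r ↦ r ^ 2 * g₂ r + (ν + 1) * g₁ r) s) := by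
  refine HasBesselLaplacian.const_mul _ ⟨_, _,
    hg.hasDerivAt_integral_comp_thirdSide hg₁.continuous hν hs,
    hg₁.hasDerivAt_integral_comp_thirdSide_mul hg₂ hν hs, fun t ↦ ?_⟩
  have hcont₁ := hg₁.continuous
  have hparts := integral_add_mul_sin_rpow_eq_zero hν (by fun_prop) (by fun_prop)
    fun φ hφ ↦ hg₁.comp_thirdSide_angle hs t hφ
  have hexpand : ∀ φ : ℝ,
      t * (g₂ (thirdSide s t φ) * (t - s * cos φ) ^ 2 + g₁ (thirdSide s t φ)) +
        ν * (g₁ (thirdSide s t φ) * (t - s * cos φ)) =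
      t * (thirdSide s t φ ^ 2 * g₂ (thirdSide s t φ) + (ν + 1) * g₁ (thirdSide s t φ)) +
        -s * (ν * (g₁ (thirdSide s t φ) * cos φ) + g₂ (thirdSide s t φ) * (s * t) * sin φ ^ 2) :=
    fun φ ↦ by rw [thirdSide_sq]; ring
  rw [← integral_linear_combination_mul_sin_rpow hν (by fun_prop) (by fun_prop)]
  simp only [hexpand]
  rw [integral_linear_combination_mul_sin_rpow hν (by fun_prop) (by fun_prop), hparts, mul_zero,
    add_zero]
  rfl

end HasRadialDeriv

end GeneralizedTranslation

theorem genT_normBessel_general (ν : ℝ) (hν : 0 < ν) (lam mu : ℝ) :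
    genT ν (normBessel ((ν - 1) / 2)) mu lam =
      normBessel ((ν - 1) / 2) lam * normBessel ((ν - 1) / 2) mu := by
  rcases eq_or_ne mu 0 with rfl | hmu
  · rw [genT_comm, genT_zero_right, normBessel_abs]
  obtain ⟨g₁, g₂, hg, hg₁, hg₂, heigen⟩ := exists_hasRadialDeriv_normBessel hν
  have hj := hg.hasBesselLaplacian hg₁ ν
  have hT := hg.hasBesselLaplacian_genT hg₁ hg₂ hν hmu
  rw [funext heigen] at hj hT
  rw [genT_neg] at hT
  have hjT := HasBesselLaplacian.eq_of_neg_self hν hT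
    (by simpa only [Pi.neg_def, mul_neg] using hj.const_mul (normBessel ((ν - 1) / 2) mu))
    (by rw [genT_zero_right, normBessel_abs])
  rw [hjT, mul_comm]

/-- Product formula for the generalized translation of the normalized Bessel function:
`ᵛ𝒯_μ^λ j_{(ν−1)/2}(μ) = j_{(ν−1)/2}(λ) j_{(ν−1)/2}(μ)`. -/
theorem genT_normBessel (ν : ℝ) (hν : 0 < ν) (lam mu : ℝ) (hlam : 0 ≤ lam) (hmu : 0 ≤ mu) :
    genT ν (normBessel ((ν - 1) / 2)) mu lam =
      normBessel ((ν - 1) / 2) lam * normBessel ((ν - 1) / 2) mu :=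
  genT_normBessel_general ν hν lam mu
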